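/- Let Λ ⊂ ℝ^n be a full-rank lattice and σ_s > 0. For t ∈ ℝ^n define m(t) = E_{X ~ D_{Λ+t, σ_s}}[‖X‖²]/σ_s² = (Σ_{y ∈ Λ+t} ‖y/σ_s‖² f_{σ_s}(y))/f_{σ_s}(Λ+t). Then for every ε > 0, the set {t ∈ ℝ^n : m(t) ≥ (1+ε)n} has measure at most exp(−(ε²/4 − ε³/6)·n) under the Gaussian measure N(0, σ_s² I_n). -/

import Mathlib

open MeasureTheory Real Filter Pointwise
open scoped ENNReal RealInnerProductSpace

noncomputable section

/-- The (continuous) Gaussian density with parameter `σ` on `ℝⁿ`: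
`f_σ(x) = (2πσ²)^{-n/2} exp(-‖x‖²/(2σ²))`. -/
def gaussF (n : ℕ) (σ : ℝ) (x : EuclideanSpace ℝ (Fin n)) : ℝ :=
  (2 * π * σ ^ 2) ^ (-(n : ℝ) / 2) * Real.exp (-‖x‖ ^ 2 / (2 * σ ^ 2))

/-- The Gaussian mass `f_σ(S) = Σ_{y ∈ S} f_σ(y)` of a (countable) set `S ⊆ ℝⁿ`. -/
def gaussMass (n : ℕ) (σ : ℝ) (S : Set (EuclideanSpace ℝ (Fin n))) : ℝ :=
  ∑' y : S, gaussF n σ y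

/-- The Gaussian measure `N(0, σ² Iₙ)` on `ℝⁿ`, given by its density w.r.t. Lebesgue measure. -/
def gaussMeasure (n : ℕ) (σ : ℝ) : Measure (EuclideanSpace ℝ (Fin n)) :=
  volume.withDensity fun x => ENNReal.ofReal (gaussF n σ x)

/-- The coset `S + t` of a set `S ⊆ ℝⁿ`, i.e. `{x | x - t ∈ S}`. -/
def coset (n : ℕ) (S : Set (EuclideanSpace ℝ (Fin n))) (t : EuclideanSpace ℝ (Fin n)) :
    Set (EuclideanSpace ℝ (Fin n)) := {x | x - t ∈ S}

/-- The Voronoi cell of `S`: `{x | ⟪x,y⟫ ≤ ‖y‖²/2 for all y ∈ S}`. -/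
def voronoi (n : ℕ) (S : Set (EuclideanSpace ℝ (Fin n))) : Set (EuclideanSpace ℝ (Fin n)) :=
  {x | ∀ y ∈ S, ⟪x, y⟫ ≤ ‖y‖ ^ 2 / 2}

/-- The inverse error function `err⁻¹_ε(Λ)`: the least `s > 0` such that a standard Gaussian
leaves `s · V(Λ)` with probability at most `ε`. -/
def errInv (n : ℕ) (ε : ℝ) (S : Set (EuclideanSpace ℝ (Fin n))) : ℝ :=
  sInf {s : ℝ | 0 < s ∧ gaussMeasure n 1 ((s • voronoi n S)ᶜ) ≤ ENNReal.ofReal ε}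

/-- The Shannon entropy (in nats) of the discrete Gaussian `D_{S,σ}` supported on `S`,
which assigns mass `f_σ(y)/f_σ(S)` to each `y ∈ S`. -/
def dgEntropy (n : ℕ) (σ : ℝ) (S : Set (EuclideanSpace ℝ (Fin n))) : ℝ :=
  -∑' y : S, (gaussF n σ y / gaussMass n σ S) * Real.log (gaussF n σ y / gaussMass n σ S)

/-- The flatness factor `ε_Λ(σ) = sup_{x ∈ V(Λ)} |V(Λ)·f_σ(Λ+x) − 1|`. -/
def flatness (n : ℕ) (L : Submodule ℤ (EuclideanSpace ℝ (Fin n))) (σ : ℝ) : ℝ :=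
  ⨆ x : voronoi n (L : Set (EuclideanSpace ℝ (Fin n))),
    |ZLattice.covolume L volume *
        gaussMass n σ (coset n (L : Set (EuclideanSpace ℝ (Fin n))) x) - 1|

/-!
Exponential tilting turns `f_σ` into a multiple of a wider Gaussian: for `r ≥ 1` and
`l = (1 - r⁻²) / 2`, `exp (l‖x‖² / σ²) f_σ(x) = rⁿ f_{rσ}(x)`. Summing over `Λ + t`, Jensen's
inequality gives `exp (l m(t)) f_σ(Λ + t) ≤ rⁿ f_{rσ}(Λ + t)`, so where `m(t) ≥ c` the
periodization of `f_σ` is at most `rⁿ exp (-l c)` times that of `f_{rσ}`. By mass transport along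
the orbits of `Λ` the same inequality holds for the integral of `f_σ` over these `t` and the total
integral of `f_{rσ}`, which is `1`. The choice `r² = 1 + ε`, `c = (1 + ε) n` bounds the measure by
`((1 + ε) exp (-ε)) ^ (n / 2)`, and `log (1 + ε) ≤ ε - ε² / 2 + ε³ / 3`.
-/

section Periodization

variable {G α : Type*} [AddGroup G] [AddAction G α]

lemma tsum_vadd_vadd {M : Type*} [AddCommMonoid M] [TopologicalSpace M] (f : α → M) (h : G)
    (x : α) : ∑' g : G, f (g +ᵥ (h +ᵥ x)) = ∑' g : G, f (g +ᵥ x) := by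
  simp_rw [← add_vadd]
  exact (Equiv.addRight h).tsum_eq fun g ↦ f (g +ᵥ x)

variable [Countable G] [MeasurableSpace α] [MeasurableConstVAdd G α] {μ : Measure α}
  [VAddInvariantMeasure G α μ] {u w : α → ℝ≥0∞}

lemma lintegral_mul_tsum_vadd (hu : Measurable u) (hw : Measurable w) :
    ∫⁻ x, u x * ∑' g : G, w (g +ᵥ x) ∂μ = ∫⁻ x, (∑' g : G, u (g +ᵥ x)) * w x ∂μ := by
  have shift (g : G) : ∫⁻ x, u x * w (g +ᵥ x) ∂μ = ∫⁻ x, u (-g +ᵥ x) * w x ∂μ := by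
    simpa using (measurePreserving_vadd g μ).lintegral_comp
      ((hu.comp (measurable_const_vadd (-g))).mul hw)
  calc ∫⁻ x, u x * ∑' g : G, w (g +ᵥ x) ∂μ
      = ∑' g : G, ∫⁻ x, u x * w (g +ᵥ x) ∂μ := by
        simp_rw [← ENNReal.tsum_mul_left]
        exact lintegral_tsum fun g ↦ (hu.mul (hw.comp (measurable_const_vadd g))).aemeasurable
    _ = ∑' g : G, ∫⁻ x, u (g +ᵥ x) * w x ∂μ := by
        simp_rw [shift]
        exact (Equiv.neg G).tsum_eq fun g ↦ ∫⁻ x, u (g +ᵥ x) * w x ∂μ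
    _ = ∫⁻ x, (∑' g : G, u (g +ᵥ x)) * w x ∂μ := by
        simp_rw [← ENNReal.tsum_mul_right]
        exact (lintegral_tsum fun g ↦
          ((hu.comp (measurable_const_vadd g)).mul hw).aemeasurable).symm

-- Mass transport: `w` is redistributed along each orbit in proportion to `u`. The shares
-- `v = u / U` sum to at most `1` over an orbit, and `x ∈ s` receives `v x * W x ≥ u x / C`.
lemma setLIntegral_le_const_mul_of_tsum_vadd_le (hu : Measurable u) (hw : Measurable w)
    {C : ℝ≥0∞} {s : Set α} (hfin : ∀ x ∈ s, ∑' g : G, u (g +ᵥ x) ≠ ∞)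
    (hle : ∀ x ∈ s, ∑' g : G, u (g +ᵥ x) ≤ C * ∑' g : G, w (g +ᵥ x)) :
    ∫⁻ x in s, u x ∂μ ≤ C * ∫⁻ x, w x ∂μ := by
  let U x := ∑' g : G, u (g +ᵥ x)
  let W x := ∑' g : G, w (g +ᵥ x)
  let v x := u x / U x
  have hU : Measurable U := .tsum fun g ↦ hu.comp (measurable_const_vadd g)
  have hW : Measurable W := .tsum fun g ↦ hw.comp (measurable_const_vadd g)
  have hv : Measurable v := hu.div hU
  have le_v_mul (x) (hx : x ∈ s) : u x ≤ C * (v x * W x) := by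
    have hu_le : u x ≤ U x := by simpa using ENNReal.le_tsum (f := fun g : G ↦ u (g +ᵥ x)) 0
    calc u x = v x * U x := (ENNReal.div_mul_cancel'
          (fun h0 ↦ le_zero_iff.1 (h0 ▸ hu_le)) (absurd · (hfin x hx))).symm
      _ ≤ v x * (C * W x) := by gcongr; exact hle x hx
      _ = C * (v x * W x) := mul_left_comm ..
  have tsum_v_le (x) : ∑' g : G, v (g +ᵥ x) ≤ 1 := by
    simp_rw [v, U, tsum_vadd_vadd, div_eq_mul_inv, ENNReal.tsum_mul_right, ← div_eq_mul_inv]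
    exact ENNReal.div_self_le_one
  calc ∫⁻ x in s, u x ∂μ ≤ ∫⁻ x in s, C * (v x * W x) ∂μ :=
        setLIntegral_mono ((hv.mul hW).const_mul C) le_v_mul
    _ ≤ ∫⁻ x, C * (v x * W x) ∂μ := setLIntegral_le_lintegral ..
    _ = C * ∫⁻ x, (∑' g : G, v (g +ᵥ x)) * w x ∂μ := by
        rw [lintegral_const_mul C (f := fun x ↦ v x * W x) (hv.mul hW),
          lintegral_mul_tsum_vadd hv hw]
    _ ≤ C * ∫⁻ x, w x ∂μ := by
        gcongr with x
        exact mul_le_of_le_one_left' (tsum_v_le x)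

end Periodization

lemma exp_tsum_mul_div_tsum_mul_tsum_le {ι : Type*} {g h : ι → ℝ} (hg : ∀ i, 0 ≤ g i)
    (hh : ∀ i, 0 ≤ h i) (hexp : Summable fun i ↦ exp (h i) * g i) :
    exp ((∑' i, h i * g i) / ∑' i, g i) * ∑' i, g i ≤ ∑' i, exp (h i) * g i := by
  have sum_g : Summable g := hexp.of_nonneg_of_le hg fun i ↦
    le_mul_of_one_le_left (hg i) (one_le_exp (hh i))
  have sum_hg : Summable fun i ↦ h i * g i :=
    hexp.of_nonneg_of_le (fun i ↦ mul_nonneg (hh i) (hg i)) fun i ↦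
      mul_le_mul_of_nonneg_right ((lt_add_one _).le.trans (add_one_le_exp _)) (hg i)
  set m := (∑' i, h i * g i) / ∑' i, g i with hm
  obtain hG | hG := eq_or_ne (∑' i, g i) 0
  · rw [hG, mul_zero]
    exact tsum_nonneg fun i ↦ mul_nonneg (exp_pos _).le (hg i)
  have tangent (i) : exp m * (1 - m) * g i + exp m * (h i * g i) ≤ exp (h i) * g i := by
    calc exp m * (1 - m) * g i + exp m * (h i * g i) = exp m * (h i - m + 1) * g i := by ring
      _ ≤ exp m * exp (h i - m) * g i := by
        gcongr
        exacts [hg i, add_one_le_exp _]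
      _ = exp (h i) * g i := by rw [← exp_add, add_sub_cancel]
  calc exp m * ∑' i, g i
      = exp m * (1 - m) * ∑' i, g i + exp m * ∑' i, h i * g i := by
        rw [← (eq_div_iff hG).1 hm]; ring
    _ = ∑' i, (exp m * (1 - m) * g i + exp m * (h i * g i)) := by
        rw [(sum_g.mul_left _).tsum_add (sum_hg.mul_left _), tsum_mul_left, tsum_mul_left]
    _ ≤ ∑' i, exp (h i) * g i :=
        ((sum_g.mul_left _).add (sum_hg.mul_left _)).tsum_le_tsum tangent hexp

lemma log_one_add_le_of_nonneg {x : ℝ} (hx : 0 ≤ x) :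
    log (1 + x) ≤ x - x ^ 2 / 2 + x ^ 3 / 3 := by
  let f (y : ℝ) := y - y ^ 2 / 2 + y ^ 3 / 3 - log (1 + y)
  have deriv_f (y : ℝ) (hy : 0 ≤ y) : HasDerivAt f (y ^ 3 / (1 + y)) y := by
    have h1 : 1 + y ≠ 0 := by positivity
    refine ((((hasDerivAt_id y).sub ((hasDerivAt_pow 2 y).div_const 2)).add
      ((hasDerivAt_pow 3 y).div_const 3)).sub
        (((hasDerivAt_id y).const_add 1).log h1)).congr_deriv ?_
    simp only [id]
    field_simp
    ring
  have mono : MonotoneOn f (Set.Ici 0) := by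
    refine monotoneOn_of_hasDerivWithinAt_nonneg (f' := fun y ↦ y ^ 3 / (1 + y)) (convex_Ici 0)
      (fun y hy ↦ (deriv_f y hy).continuousAt.continuousWithinAt)
      (fun y hy ↦ (deriv_f y (interior_subset hy)).hasDerivWithinAt) fun y hy ↦ ?_
    have hy : 0 ≤ y := interior_subset hy
    positivity
  have f_nonneg : f 0 ≤ f x := mono Set.self_mem_Ici hx hx
  simpa [f] using f_nonneg

lemma summable_exp_neg_mul_sq_norm_add {E : Type*} [NormedAddCommGroup E] [NormedSpace ℝ E]
    [FiniteDimensional ℝ E] (L : Submodule ℤ E) [DiscreteTopology L] {b : ℝ} (hb : 0 < b) (t : E) :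
    Summable fun z : L ↦ exp (-b * ‖(z : E) + t‖ ^ 2) := by
  have : ProperSpace E := FiniteDimensional.proper_real E
  let k : ℝ := -(Module.finrank ℤ L : ℝ) - 1
  have decay : (fun x : ℝ ↦ exp (-b * x ^ 2)) =O[atTop] fun x ↦ x ^ k :=
    (exp_neg_mul_sq_isLittleO_exp_neg hb).isBigO.trans
      (by simpa using (isLittleO_exp_neg_mul_rpow_atTop one_pos k).isBigO)
  have escape : Tendsto (fun z : L ↦ ‖(z : E) + t‖) cofinite atTop :=
    (tendsto_norm_cocompact_atTop.comp
      (Homeomorph.addRight t).isClosedEmbedding.tendsto_cocompact).comp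
      (L.toAddSubgroup.tendsto_coe_cofinite_of_discrete
        (SetLike.isDiscrete_iff_discreteTopology.2 ‹_›))
  have hk : Summable fun z : L ↦ ‖(z : E) + t‖ ^ k := by
    simpa using ZLattice.summable_norm_sub_rpow L k (sub_one_lt _) (-t)
  exact summable_of_isBigO hk (decay.comp_tendsto escape)

section GaussF

variable {n : ℕ} {σ : ℝ}

lemma gaussF_pos (hσ : σ ≠ 0) (x : EuclideanSpace ℝ (Fin n)) : 0 < gaussF n σ x := by
  unfold gaussF
  positivity

lemma continuous_gaussF : Continuous (gaussF n σ) := by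
  unfold gaussF
  fun_prop

lemma lintegral_gaussF (hσ : σ ≠ 0) :
    ∫⁻ x : EuclideanSpace ℝ (Fin n), ENNReal.ofReal (gaussF n σ x) = 1 := by
  have hb : 0 < (2 * σ ^ 2)⁻¹ := by positivity
  have integral_eq_one : ∫ x, gaussF n σ x = 1 := by
    have hexp (x : EuclideanSpace ℝ (Fin n)) :
        -‖x‖ ^ 2 / (2 * σ ^ 2) = -(2 * σ ^ 2)⁻¹ * ‖x‖ ^ 2 := by ring
    have hdiv : π / (2 * σ ^ 2)⁻¹ = 2 * π * σ ^ 2 := by rw [div_inv_eq_mul]; ring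
    simp_rw [gaussF, hexp]
    rw [integral_const_mul, GaussianFourier.integral_rexp_neg_mul_sq_norm hb, hdiv,
      finrank_euclideanSpace_fin, ← rpow_add (by positivity), neg_div, neg_add_cancel, rpow_zero]
  rw [← ofReal_integral_eq_lintegral_ofReal
    (Integrable.of_integral_ne_zero (integral_eq_one ▸ one_ne_zero))
    (ae_of_all _ fun x ↦ (gaussF_pos hσ x).le), integral_eq_one, ENNReal.ofReal_one]

/-- The rate of the exponential tilt `exp (tiltRate r * ‖x‖² / σ²)` which, up to the factor `r ^ n`,
rescales the standard deviation of `N(0, σ² Iₙ)` from `σ` to `r * σ`. -/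
def tiltRate (r : ℝ) : ℝ := (1 - (r ^ 2)⁻¹) / 2

lemma tiltRate_nonneg {r : ℝ} (hr : 1 ≤ r) : 0 ≤ tiltRate r :=
  div_nonneg (sub_nonneg.2 (inv_le_one_of_one_le₀ (one_le_pow₀ hr))) zero_le_two

lemma exp_tiltRate_mul_gaussF (hσ : σ ≠ 0) {r : ℝ} (hr : 0 < r) (x : EuclideanSpace ℝ (Fin n)) :
    exp (tiltRate r * (‖x‖ ^ 2 / σ ^ 2)) * gaussF n σ x = r ^ n * gaussF n (r * σ) x := by
  have normalization :
      (2 * π * (r * σ) ^ 2) ^ (-(n : ℝ) / 2) = (r ^ n)⁻¹ * (2 * π * σ ^ 2) ^ (-(n : ℝ) / 2) := by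
    rw [show 2 * π * (r * σ) ^ 2 = r ^ 2 * (2 * π * σ ^ 2) by ring,
      mul_rpow (by positivity) (by positivity), ← rpow_natCast_mul hr.le, Nat.cast_ofNat,
      mul_div_cancel₀ _ two_ne_zero, rpow_neg hr.le, rpow_natCast]
  have exponent : tiltRate r * (‖x‖ ^ 2 / σ ^ 2) + -‖x‖ ^ 2 / (2 * σ ^ 2) =
      -‖x‖ ^ 2 / (2 * (r * σ) ^ 2) := by
    rw [tiltRate]
    field_simp
    ring
  rw [gaussF, gaussF, mul_left_comm, ← exp_add, exponent, normalization]
  field_simp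

end GaussF

section Coset

variable {n : ℕ} {σ : ℝ}

/-- Translation by `t` as a bijection from `S` onto the coset `S + t`; it turns sums over a coset
into sums over `S`. -/
def cosetEquiv (S : Set (EuclideanSpace ℝ (Fin n))) (t : EuclideanSpace ℝ (Fin n)) :
    S ≃ coset n S t :=
  (Equiv.addRight t).subtypeEquiv fun x ↦ by simp [coset]

lemma summable_gaussF_coset (hσ : σ ≠ 0) (L : Submodule ℤ (EuclideanSpace ℝ (Fin n)))
    [DiscreteTopology L] (t : EuclideanSpace ℝ (Fin n)) :
    Summable fun y : coset n (L : Set (EuclideanSpace ℝ (Fin n))) t ↦ gaussF n σ y := by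
  rw [← (cosetEquiv (L : Set (EuclideanSpace ℝ (Fin n))) t).summable_iff]
  refine ((summable_exp_neg_mul_sq_norm_add L (b := (2 * σ ^ 2)⁻¹) (by positivity) t).mul_left
    ((2 * π * σ ^ 2) ^ (-(n : ℝ) / 2))).congr fun z ↦ ?_
  rw [neg_mul, ← mul_neg, inv_mul_eq_div]
  rfl

lemma ofReal_gaussMass_coset (hσ : σ ≠ 0) (L : Submodule ℤ (EuclideanSpace ℝ (Fin n)))
    [DiscreteTopology L] (t : EuclideanSpace ℝ (Fin n)) :
    ENNReal.ofReal (gaussMass n σ (coset n L t)) =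
      ∑' z : L, ENNReal.ofReal (gaussF n σ (z +ᵥ t)) := by
  rw [gaussMass, ENNReal.ofReal_tsum_of_nonneg (fun y ↦ (gaussF_pos hσ _).le)
    (summable_gaussF_coset hσ L t)]
  exact ((cosetEquiv (L : Set (EuclideanSpace ℝ (Fin n))) t).tsum_eq
    fun y ↦ ENNReal.ofReal (gaussF n σ y)).symm

end Coset

section NormalizedPower

variable {n : ℕ} {σ r : ℝ}

/-- The normalized expected power `E[‖X‖²] / σ²` of a discrete Gaussian `X` supported on `S`, that
is `m(t)` when `S = Λ + t`. -/
def normalizedPower (n : ℕ) (σ : ℝ) (S : Set (EuclideanSpace ℝ (Fin n))) : ℝ :=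
  (∑' y : S, (‖(y : EuclideanSpace ℝ (Fin n))‖ ^ 2 / σ ^ 2) * gaussF n σ y) / gaussMass n σ S

lemma exp_tiltRate_mul_normalizedPower_mul_gaussMass_le (hσ : σ ≠ 0) (hr : 1 ≤ r)
    {S : Set (EuclideanSpace ℝ (Fin n))} (hS : Summable fun y : S ↦ gaussF n (r * σ) y) :
    exp (tiltRate r * normalizedPower n σ S) * gaussMass n σ S ≤
      r ^ n * gaussMass n (r * σ) S := by
  have tilt (y : S) := exp_tiltRate_mul_gaussF hσ (one_pos.trans_le hr) y.1
  have jensen := exp_tsum_mul_div_tsum_mul_tsum_le (fun y : S ↦ (gaussF_pos hσ y.1).le)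
    (fun y ↦ mul_nonneg (tiltRate_nonneg hr) (by positivity : 0 ≤ ‖y.1‖ ^ 2 / σ ^ 2))
    ((hS.mul_left (r ^ n)).congr fun y ↦ (tilt y).symm)
  simp_rw [tilt, mul_assoc, tsum_mul_left, mul_div_assoc] at jensen
  exact jensen

lemma gaussMass_le_of_le_normalizedPower (hσ : σ ≠ 0) (hr : 1 ≤ r)
    {S : Set (EuclideanSpace ℝ (Fin n))} (hS : Summable fun y : S ↦ gaussF n (r * σ) y) {c : ℝ}
    (hc : c ≤ normalizedPower n σ S) :
    gaussMass n σ S ≤ r ^ n * exp (-(tiltRate r * c)) * gaussMass n (r * σ) S := by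
  have hmass : 0 ≤ gaussMass n σ S := tsum_nonneg fun y ↦ (gaussF_pos hσ _).le
  have hl : 0 ≤ tiltRate r := tiltRate_nonneg hr
  rw [mul_right_comm, exp_neg, ← div_eq_mul_inv, le_div_iff₀' (exp_pos _)]
  calc exp (tiltRate r * c) * gaussMass n σ S
      ≤ exp (tiltRate r * normalizedPower n σ S) * gaussMass n σ S := by gcongr
    _ ≤ r ^ n * gaussMass n (r * σ) S :=
      exp_tiltRate_mul_normalizedPower_mul_gaussMass_le hσ hr hS

lemma gaussMeasure_setOf_le_normalizedPower_le (hσ : σ ≠ 0) (hr : 1 ≤ r)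
    (L : Submodule ℤ (EuclideanSpace ℝ (Fin n))) [DiscreteTopology L] (c : ℝ) :
    gaussMeasure n σ {t | c ≤ normalizedPower n σ (coset n L t)} ≤
      ENNReal.ofReal (r ^ n * exp (-(tiltRate r * c))) := by
  have hrσ : r * σ ≠ 0 := mul_ne_zero (one_pos.trans_le hr).ne' hσ
  have : Countable L := countable_of_Lindelof_of_discrete
  have : MeasurableConstVAdd L (EuclideanSpace ℝ (Fin n)) :=
    inferInstanceAs (MeasurableConstVAdd L.toAddSubgroup _)
  have : VAddInvariantMeasure L (EuclideanSpace ℝ (Fin n)) volume :=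
    inferInstanceAs (VAddInvariantMeasure L.toAddSubgroup _ _)
  rw [gaussMeasure, withDensity_apply', ← mul_one (ENNReal.ofReal _), ← lintegral_gaussF hrσ]
  refine setLIntegral_le_const_mul_of_tsum_vadd_le (G := L)
    continuous_gaussF.measurable.ennreal_ofReal continuous_gaussF.measurable.ennreal_ofReal
    (fun t _ ↦ ?_) fun t ht ↦ ?_
  · rw [← ofReal_gaussMass_coset hσ L t]
    exact ENNReal.ofReal_ne_top
  · rw [← ofReal_gaussMass_coset hσ L t, ← ofReal_gaussMass_coset hrσ L t,
      ← ENNReal.ofReal_mul (by positivity)]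
    exact ENNReal.ofReal_le_ofReal
      (gaussMass_le_of_le_normalizedPower hσ hr (summable_gaussF_coset hrσ L t) ht)

end NormalizedPower

lemma sqrt_one_add_pow_mul_exp_le {ε : ℝ} (hε : 0 ≤ ε) (n : ℕ) :
    √(1 + ε) ^ n * exp (-(ε / 2 * n)) ≤ exp (-(ε ^ 2 / 4 - ε ^ 3 / 6) * n) := by
  have h1 : 0 < 1 + ε := by positivity
  calc √(1 + ε) ^ n * exp (-(ε / 2 * n))
      = exp ((log (1 + ε) - ε) / 2 * n) := by
        rw [← exp_log (sqrt_pos.2 h1), ← exp_nat_mul, ← exp_add, log_sqrt h1.le]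
        ring_nf
    _ ≤ exp (-(ε ^ 2 / 4 - ε ^ 3 / 6) * n) := by
        gcongr
        linarith [log_one_add_le_of_nonneg hε]

theorem power_upper_tail_general (n : ℕ) (L : Submodule ℤ (EuclideanSpace ℝ (Fin n)))
    [DiscreteTopology L] {σ : ℝ} (hσ : σ ≠ 0) {ε : ℝ} (hε : 0 ≤ ε) :
    gaussMeasure n σ {t | (1 + ε) * n ≤ normalizedPower n σ (coset n L t)} ≤
      ENNReal.ofReal (exp (-(ε ^ 2 / 4 - ε ^ 3 / 6) * n)) := by
  have exponent : tiltRate √(1 + ε) * ((1 + ε) * n) = ε / 2 * n := by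
    rw [tiltRate, sq_sqrt (by positivity)]
    field_simp
    ring
  refine (gaussMeasure_setOf_le_normalizedPower_le hσ
    (one_le_sqrt.2 (le_add_of_nonneg_right hε)) L _).trans (ENNReal.ofReal_le_ofReal ?_)
  rw [exponent]
  exact sqrt_one_add_pow_mul_exp_le hε n

/-- upper tail bound for the normalized expected power
`m(t) = E_{X ~ D_{Λ+t,σ_s}}[‖X‖²]/σ_s²` of the dithered discrete Gaussian. -/
theorem power_upper_tail (n : ℕ) (L : Submodule ℤ (EuclideanSpace ℝ (Fin n)))
    [DiscreteTopology L] [IsZLattice ℝ L]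
    (σs : ℝ) (hσs : 0 < σs) (ε : ℝ) (hε : 0 < ε) :
    gaussMeasure n σs {t : EuclideanSpace ℝ (Fin n) |
      (1 + ε) * n ≤
        (∑' y : coset n (L : Set (EuclideanSpace ℝ (Fin n))) t,
            (‖(y : EuclideanSpace ℝ (Fin n))‖ ^ 2 / σs ^ 2) * gaussF n σs y) /
          gaussMass n σs (coset n (L : Set (EuclideanSpace ℝ (Fin n))) t)}
      ≤ ENNReal.ofReal (Real.exp (-(ε ^ 2 / 4 - ε ^ 3 / 6) * n)) :=
  power_upper_tail_general n L hσs.ne' hε.le
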